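/- Let F be a presheaf on 𝒱I and let (V,x) and (T,y) be central elements of F. Then there exist a unique class [M,ν,τ] ∈ 𝐁(V,T) and a unique z ∈ F(V⊕_{ν,τ}T) such that ι_V^* z = x and ι_T^* z = y; moreover the pair (V⊕_{ν,τ}T, z) is central for F. -/

import Mathlib

set_option maxHeartbeats 1000000

namespace Paper

/-- A finite-dimensional vector space over `𝔽_p = ZMod p`: an object of the
categories `𝒱^f` and `𝒱I`. -/
structure FDVec (p : ℕ) [Fact p.Prime] : Type 1 where
  carrier : Type
  [addCommGroup' : AddCommGroup carrier]
  [module' : Module (ZMod p) carrier]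
  [finiteDimensional' : FiniteDimensional (ZMod p) carrier]

attribute [instance] FDVec.addCommGroup' FDVec.module' FDVec.finiteDimensional'

instance (p : ℕ) [Fact p.Prime] : CoeSort (FDVec p) Type := ⟨FDVec.carrier⟩

abbrev FDVec.of (p : ℕ) [Fact p.Prime] (X : Type) [AddCommGroup X] [Module (ZMod p) X]
    [FiniteDimensional (ZMod p) X] : FDVec p := ⟨X⟩

variable {p : ℕ} [Fact p.Prime]

/-- The object of `𝒱I` determined by a subspace. -/
abbrev subFD {W : FDVec p} (U : Submodule (ZMod p) W) : FDVec p := FDVec.of p U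

theorem comp_injective {A B C : Type} [AddCommGroup A] [Module (ZMod p) A]
    [AddCommGroup B] [Module (ZMod p) B] [AddCommGroup C] [Module (ZMod p) C]
    (f : A →ₗ[ZMod p] B) (g : B →ₗ[ZMod p] C)
    (hf : Function.Injective f) (hg : Function.Injective g) :
    Function.Injective (g ∘ₗ f) := fun _ _ h => hf (hg h)

theorem linearMap_id_injective (V : Type) [AddCommGroup V] [Module (ZMod p) V] :
    Function.Injective (LinearMap.id : V →ₗ[ZMod p] V) := fun _ _ h => h

theorem equiv_toLinearMap_injective {A B : Type} [AddCommGroup A] [Module (ZMod p) A]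
    [AddCommGroup B] [Module (ZMod p) B] (e : A ≃ₗ[ZMod p] B) :
    Function.Injective (e.toLinearMap : A →ₗ[ZMod p] B) := e.injective

/-- A presheaf on the category `𝒱I` of finite-dimensional `𝔽_p`-vector spaces
and injective linear maps: a contravariant functor to `Set`. -/
structure VIPresheaf (p : ℕ) [Fact p.Prime] where
  obj : FDVec p → Type
  map : ∀ {V W : FDVec p} (f : V →ₗ[ZMod p] W), Function.Injective f → obj W → obj V
  map_id : ∀ (V : FDVec p) (h : Function.Injective (LinearMap.id : V →ₗ[ZMod p] V))
      (x : obj V), map LinearMap.id h x = x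
  map_comp : ∀ {V W X : FDVec p} (f : V →ₗ[ZMod p] W) (hf : Function.Injective f)
      (g : W →ₗ[ZMod p] X) (hg : Function.Injective g)
      (hgf : Function.Injective (g ∘ₗ f)) (x : obj X),
      map (g ∘ₗ f) hgf x = map f hf (map g hg x)

/-- A groupoid whose objects are the pairs `(U, i)` with `U` a subspace of `W i`,
and whose morphisms are linear isomorphisms between such subspaces. -/
structure SubGroupoid {ι : Type} (W : ι → FDVec p) where
  mor : ∀ (i j : ι) (U : Submodule (ZMod p) (W i)) (U' : Submodule (ZMod p) (W j)),
    Set (↥U ≃ₗ[ZMod p] ↥U')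
  id_mem : ∀ i U, LinearEquiv.refl (ZMod p) ↥U ∈ mor i i U U
  comp_mem : ∀ (i j k : ι) (U : Submodule (ZMod p) (W i)) (U' : Submodule (ZMod p) (W j))
      (U'' : Submodule (ZMod p) (W k)) (α : ↥U ≃ₗ[ZMod p] ↥U')
      (β : ↥U' ≃ₗ[ZMod p] ↥U''),
      α ∈ mor i j U U' → β ∈ mor j k U' U'' → (α.trans β) ∈ mor i k U U''
  inv_mem : ∀ (i j : ι) (U : Submodule (ZMod p) (W i)) (U' : Submodule (ZMod p) (W j))
      (α : ↥U ≃ₗ[ZMod p] ↥U'),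
      α ∈ mor i j U U' → α.symm ∈ mor j i U' U

section Restriction

variable {Wi Wj : FDVec p} {U : Submodule (ZMod p) Wi} {U' : Submodule (ZMod p) Wj}

/-- The restriction of `α : U ≃ U'` to a subspace `M ≤ U`, as a map to the ambient space. -/
def restrictMap (α : ↥U ≃ₗ[ZMod p] ↥U') {M : Submodule (ZMod p) Wi}
    (hMU : M ≤ U) : ↥M →ₗ[ZMod p] Wj :=
  U'.subtype ∘ₗ (α.toLinearMap) ∘ₗ (Submodule.inclusion hMU)

theorem restrictMap_injective (α : ↥U ≃ₗ[ZMod p] ↥U')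
    {M : Submodule (ZMod p) Wi} (hMU : M ≤ U) :
    Function.Injective (restrictMap α hMU) := by
  intro a b hab
  have h1 : α (Submodule.inclusion hMU a) = α (Submodule.inclusion hMU b) := Subtype.ext hab
  have h2 := α.injective h1
  have h3 := congrArg Subtype.val h2
  exact Subtype.ext h3

/-- The image `α(M)` of a subspace `M ≤ U` under `α : U ≃ U'`. -/
def restrictImg (α : ↥U ≃ₗ[ZMod p] ↥U') {M : Submodule (ZMod p) Wi}
    (hMU : M ≤ U) : Submodule (ZMod p) Wj :=
  LinearMap.range (restrictMap α hMU)

/-- The restriction-corestriction `α_M : M ≃ α(M)` of `α : U ≃ U'` to `M ≤ U`. -/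
noncomputable def restrictEquiv (α : ↥U ≃ₗ[ZMod p] ↥U')
    {M : Submodule (ZMod p) Wi} (hMU : M ≤ U) :
    ↥M ≃ₗ[ZMod p] ↥(restrictImg α hMU) :=
  LinearEquiv.ofInjective _ (restrictMap_injective α hMU)

end Restriction

/-- The restriction property of a groupoid on subspaces. -/
def SubGroupoid.HasRestriction {ι : Type} {W : ι → FDVec p} (G : SubGroupoid W) : Prop :=
  ∀ (i j : ι) (U : Submodule (ZMod p) (W i)) (U' : Submodule (ZMod p) (W j))
    (α : ↥U ≃ₗ[ZMod p] ↥U'), α ∈ G.mor i j U U' →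
    ∀ (M : Submodule (ZMod p) (W i)) (hMU : M ≤ U),
      restrictEquiv α hMU ∈ G.mor i j M (restrictImg α hMU)

/-- An element of `⊔_{i} Hom_{𝒱I}(V, W i)`. -/
def InjHom (V : FDVec p) {ι : Type} (W : ι → FDVec p) : Type :=
  Σ i : ι, {f : V →ₗ[ZMod p] W i // Function.Injective f}

/-- The relation `∼_𝒢` on `⊔_i Hom_{𝒱I}(V, W i)`. -/
def SubGroupoid.Rel {ι : Type} {W : ι → FDVec p} (G : SubGroupoid W) (V : FDVec p)
    (x y : InjHom V W) : Prop :=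
  ∃ α ∈ G.mor x.1 y.1 (LinearMap.range x.2.1) (LinearMap.range y.2.1),
    ∀ v : V, ((α (x.2.1.rangeRestrict v) : ↥(LinearMap.range y.2.1)) : W y.1) = y.2.1 v

/-- A generating family of a presheaf `F` on `𝒱I`: a natural surjection
`q : ⊔_i Hom_{𝒱I}(−, W i) → F`. -/
structure GenFamily {ι : Type} (W : ι → FDVec p) (F : VIPresheaf p) where
  q : ∀ (V : FDVec p) (i : ι) (f : V →ₗ[ZMod p] W i), Function.Injective f → F.obj V
  natural : ∀ (T V : FDVec p) (β : T →ₗ[ZMod p] V) (hβ : Function.Injective β)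
      (i : ι) (f : V →ₗ[ZMod p] W i) (hf : Function.Injective f)
      (hfβ : Function.Injective (f ∘ₗ β)),
      q T i (f ∘ₗ β) hfβ = F.map β hβ (q V i f hf)
  surjective : ∀ (V : FDVec p) (x : F.obj V), ∃ i f hf, q V i f hf = x

/-- `φ_i = q(id_{W i})`. -/
def GenFamily.phi {ι : Type} {W : ι → FDVec p} {F : VIPresheaf p} (Q : GenFamily W F)
    (i : ι) : F.obj (W i) :=
  Q.q (W i) i LinearMap.id (linearMap_id_injective _)

/-- The morphisms of the groupoid `𝒢_{(F,q)}`: isomorphisms `α : U ≃ U'` with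
`α^* ι_{U'}^* φ_j = ι_U^* φ_i`. -/
def GenFamily.mor {ι : Type} {W : ι → FDVec p} {F : VIPresheaf p} (Q : GenFamily W F)
    (i j : ι) (U : Submodule (ZMod p) (W i)) (U' : Submodule (ZMod p) (W j)) :
    Set (↥U ≃ₗ[ZMod p] ↥U') :=
  {α | F.map (V := subFD U) (W := subFD U') α.toLinearMap (equiv_toLinearMap_injective α)
        (F.map (V := subFD U') (W := W j) U'.subtype U'.injective_subtype (Q.phi j))
      = F.map (V := subFD U) (W := W i) U.subtype U.injective_subtype (Q.phi i)}

/-- The relation `∼_{𝒢_{(F,q)}}`. -/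
def GenFamily.GRel {ι : Type} {W : ι → FDVec p} {F : VIPresheaf p} (Q : GenFamily W F)
    (V : FDVec p) (x y : InjHom V W) : Prop :=
  ∃ α ∈ Q.mor x.1 y.1 (LinearMap.range x.2.1) (LinearMap.range y.2.1),
    ∀ v : V, ((α (x.2.1.rangeRestrict v) : ↥(LinearMap.range y.2.1)) : W y.1) = y.2.1 v

/-- `x ∈ F_i(V)`, where `F_i ⊆ F` is the image of `Hom_{𝒱I}(−, W i)` under `q`. -/
def GenFamily.memComponent {ι : Type} {W : ι → FDVec p} {F : VIPresheaf p}
    (Q : GenFamily W F) (i : ι) (V : FDVec p) (x : F.obj V) : Prop :=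
  ∃ f hf, Q.q V i f hf = x

/-- Minimality of a generating family: `F_i ⊄ F_j` for `i ≠ j`. -/
def GenFamily.Minimal {ι : Type} {W : ι → FDVec p} {F : VIPresheaf p}
    (Q : GenFamily W F) : Prop :=
  ∀ i j : ι, i ≠ j →
    ¬ (∀ (V : FDVec p) (x : F.obj V), Q.memComponent i V x → Q.memComponent j V x)

/-- A class in `𝐁(V, W)`, represented canonically by its "glue" subspace
`G = {(ν m, −ω m) : m ∈ M} ⊆ V × W`.  The two conditions express the injectivity
of `ν` and of `ω` respectively. -/
structure Corr (p : ℕ) [Fact p.Prime] (V W : FDVec p) where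
  carrier : Submodule (ZMod p) (↥V × ↥W)
  inj_left : ∀ m ∈ carrier, Prod.fst m = 0 → m = 0
  inj_right : ∀ m ∈ carrier, Prod.snd m = 0 → m = 0

/-- The pushout `V ⊕_{ν,ω} W` of a class of `𝐁(V,W)`. -/
abbrev Corr.po {V W : FDVec p} (c : Corr p V W) : FDVec p :=
  FDVec.of p ((↥V × ↥W) ⧸ c.carrier)

/-- The canonical injection `ι_V : V → V ⊕_{ν,ω} W`. -/
def Corr.inl {V W : FDVec p} (c : Corr p V W) : V →ₗ[ZMod p] c.po :=
  c.carrier.mkQ ∘ₗ LinearMap.inl (ZMod p) ↥V ↥W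

/-- The canonical injection `ι_W : W → V ⊕_{ν,ω} W`. -/
def Corr.inr {V W : FDVec p} (c : Corr p V W) : W →ₗ[ZMod p] c.po :=
  c.carrier.mkQ ∘ₗ LinearMap.inr (ZMod p) ↥V ↥W

theorem Corr.inl_injective {V W : FDVec p} (c : Corr p V W) :
    Function.Injective c.inl := by
  intro a b hab
  have h : (Submodule.Quotient.mk ((a, 0) : ↥V × ↥W) : (↥V × ↥W) ⧸ c.carrier)
      = Submodule.Quotient.mk (b, 0) := hab
  have hmem : ((a, 0) : ↥V × ↥W) - (b, 0) ∈ c.carrier := by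
    rwa [Submodule.Quotient.eq] at h
  have h2 := c.inj_right _ hmem (by simp)
  have h3 := congrArg Prod.fst h2
  simpa [sub_eq_zero] using h3

theorem Corr.inr_injective {V W : FDVec p} (c : Corr p V W) :
    Function.Injective c.inr := by
  intro a b hab
  have h : (Submodule.Quotient.mk ((0, a) : ↥V × ↥W) : (↥V × ↥W) ⧸ c.carrier)
      = Submodule.Quotient.mk (0, b) := hab
  have hmem : ((0, a) : ↥V × ↥W) - (0, b) ∈ c.carrier := by
    rwa [Submodule.Quotient.eq] at h
  have h2 := c.inj_left _ hmem (by simp)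
  have h3 := congrArg Prod.snd h2
  simpa [sub_eq_zero] using h3

/-- The fibre `σ_{(V,x)}F(W)` of `σ_V F(W) = ⊔_{𝐁(V,W)} F(V ⊕_{ν,ω} W)` over `x ∈ F(V)`. -/
def CentralFib (F : VIPresheaf p) (V : FDVec p) (x : F.obj V) (W : FDVec p) : Type :=
  Σ c : Corr p V W,
    {b : F.obj c.po // F.map (V := V) (W := c.po) c.inl c.inl_injective b = x}

/-- The map `ρ_{F,(V,x)} : σ_{(V,x)}F(W) → F(W)`, sending `b` to `ι_W^* b`. -/
def centralMap (F : VIPresheaf p) (V : FDVec p) (x : F.obj V) (W : FDVec p) :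
    CentralFib F V x W → F.obj W :=
  fun s => F.map (V := W) (W := Sigma.fst s |>.po) s.1.inr s.1.inr_injective s.2.1

/-- `(V, x)` is central for `F` if `ρ_{F,(V,x)}` is an isomorphism of presheaves. -/
def VIPresheaf.IsCentral (F : VIPresheaf p) (V : FDVec p) (x : F.obj V) : Prop :=
  ∀ W : FDVec p, Function.Bijective (centralMap F V x W)

/-- The class of `𝐁(V, U)` associated with a pair of injections `δ : V → W`, `ε : U → W`:
its glue subspace is `ker(δ + ε) ⊆ V × U`. -/
def kerCorr {V U W : FDVec p} (δ : V →ₗ[ZMod p] W) (ε : U →ₗ[ZMod p] W)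
    (hδ : Function.Injective δ) (hε : Function.Injective ε) : Corr p V U where
  carrier := LinearMap.ker (δ.coprod ε)
  inj_left := by
    intro m hm h1
    have hk : δ m.1 + ε m.2 = 0 := by simpa [LinearMap.mem_ker] using hm
    rw [h1] at hk
    simp only [map_zero, zero_add] at hk
    have h2 : m.2 = 0 := hε (by simpa using hk)
    exact Prod.ext h1 h2
  inj_right := by
    intro m hm h2
    have hk : δ m.1 + ε m.2 = 0 := by simpa [LinearMap.mem_ker] using hm
    rw [h2] at hk
    simp only [map_zero, add_zero] at hk
    have h1 : m.1 = 0 := hδ (by simpa using hk)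
    exact Prod.ext h1 h2

/-- The isomorphism `ε ↑ δ : V ⊕_{ν,μ} U ≃ δ(V) + ε(U)` of the first isomorphism theorem. -/
noncomputable def upArrow {V U W : FDVec p} (δ : V →ₗ[ZMod p] W) (ε : U →ₗ[ZMod p] W) :
    ((↥V × ↥U) ⧸ LinearMap.ker (δ.coprod ε)) ≃ₗ[ZMod p]
      ↥(LinearMap.range δ ⊔ LinearMap.range ε : Submodule (ZMod p) W) :=
  (δ.coprod ε).quotKerEquivRange ≪≫ₗ LinearEquiv.ofEq _ _ (LinearMap.range_coprod δ ε)

/-- The class `[T, id_T, α] ∈ 𝐁(V, T)` associated with an injection `α : T → V`. -/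
def idCorr {V T : FDVec p} (α : T →ₗ[ZMod p] V) (hα : Function.Injective α) :
    Corr p V T where
  carrier := LinearMap.range (α.prod (-(LinearMap.id : T →ₗ[ZMod p] T)))
  inj_left := by
    rintro m ⟨t, rfl⟩ h1
    simp only [LinearMap.prod_apply, Pi.prod, LinearMap.neg_apply, LinearMap.id_apply] at h1 ⊢
    have ht : t = 0 := hα (by simpa using h1)
    simp [ht]
  inj_right := by
    rintro m ⟨t, rfl⟩ h2
    simp only [LinearMap.prod_apply, Pi.prod, LinearMap.neg_apply, LinearMap.id_apply] at h2 ⊢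
    have ht : t = 0 := by simpa [neg_eq_zero] using h2
    simp [ht]

/-!
The elements of `F` form a category, in which a morphism `(W, w) ⟶ (Z, z)` is an injection
`f : W → Z` with `f^* z = w`. An amalgam of `(V, x)` and `(W, w)`, that is, a class of `𝐁(V, W)`
together with an element of `F` on its pushout restricting to `x` and `w`, is a cospan
`(V, x) ⟶ (V ⊕ W, b) ⟵ (W, w)` whose legs are jointly surjective. Every cospan restricts to exactly
one amalgam, on the sum of the images of its legs, so an amalgam is a coproduct precisely when it is
the only one. Hence `(V, x)` is central if and only if it has a coproduct with every element of `F`,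
and the coproduct `(V, x) ⨿ (T, y)` inherits this property from its summands because
`((V, x) ⨿ (T, y)) ⨿ (W, w) = (V, x) ⨿ ((T, y) ⨿ (W, w))`.
-/

section Coproducts

open CategoryTheory CategoryTheory.Limits

theorem hasBinaryCoproduct_of_isColimit_binaryCofan {C : Type*} [Category C] {X Y Z P : C}
    {i : X ⟶ P} {j : Y ⟶ P} (hP : IsColimit (BinaryCofan.mk i j)) [HasBinaryCoproduct Y Z]
    [HasBinaryCoproduct X (Y ⨿ Z)] : HasBinaryCoproduct P Z := by
  obtain ⟨k, hik, hjk⟩ : ∃ k : P ⟶ X ⨿ (Y ⨿ Z), i ≫ k = coprod.inl ∧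
      j ≫ k = coprod.inl ≫ coprod.inr :=
    ⟨_, (BinaryCofan.IsColimit.desc' hP coprod.inl (coprod.inl ≫ coprod.inr)).2⟩
  refine HasColimit.mk ⟨BinaryCofan.mk k (coprod.inr ≫ coprod.inr), BinaryCofan.IsColimit.mk _
    (fun f g => coprod.desc (i ≫ f) (coprod.desc (j ≫ f) g))
    (fun f g => BinaryCofan.IsColimit.hom_ext hP ?_ ?_) (fun f g => ?_) ?_⟩
  · change i ≫ k ≫ _ = i ≫ f
    rw [reassoc_of% hik, coprod.inl_desc]
  · change j ≫ k ≫ _ = j ≫ f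
    rw [reassoc_of% hjk, coprod.inr_desc, coprod.inl_desc]
  · change (coprod.inr ≫ coprod.inr) ≫ _ = g
    rw [Category.assoc, coprod.inr_desc, coprod.inr_desc]
  · rintro T _ _ (m : X ⨿ (Y ⨿ Z) ⟶ T) rfl rfl
    change m = coprod.desc (i ≫ k ≫ m) (coprod.desc (j ≫ k ≫ m) ((coprod.inr ≫ coprod.inr) ≫ m))
    rw [reassoc_of% hik, reassoc_of% hjk]
    ext <;> simp only [coprod.inl_desc, coprod.inr_desc, Category.assoc]

namespace Corr

variable {V W : FDVec p}

theorem inl_coprod_inr (c : Corr p V W) : c.inl.coprod c.inr = c.carrier.mkQ :=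
  LinearMap.prod_ext (LinearMap.coprod_inl _ _) (LinearMap.coprod_inr _ _)

theorem hom_ext {Z : FDVec p} {c : Corr p V W} {f g : c.po →ₗ[ZMod p] Z}
    (hl : f ∘ₗ c.inl = g ∘ₗ c.inl) (hr : f ∘ₗ c.inr = g ∘ₗ c.inr) : f = g :=
  Submodule.linearMap_qext _ (LinearMap.prod_ext hl hr)

theorem eq_of_injective {c c' : Corr p V W} {e : c.po →ₗ[ZMod p] c'.po}
    (he : Function.Injective e) (hl : e ∘ₗ c.inl = c'.inl) (hr : e ∘ₗ c.inr = c'.inr) :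
    c = c' := by
  have comp_mkQ : e ∘ₗ c.carrier.mkQ = c'.carrier.mkQ := by
    rw [← c.inl_coprod_inr, ← c'.inl_coprod_inr, LinearMap.comp_coprod, hl, hr]
  have carrier_eq : c.carrier = c'.carrier := by
    rw [← c'.carrier.ker_mkQ, ← comp_mkQ,
      LinearMap.ker_comp_of_ker_eq_bot _ (LinearMap.ker_eq_bot.2 he), Submodule.ker_mkQ]
  cases c
  cases c'
  congr

end Corr

section KerCorr

variable {V U W : FDVec p} {δ : V →ₗ[ZMod p] W} {ε : U →ₗ[ZMod p] W}
  (hδ : Function.Injective δ) (hε : Function.Injective ε)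

/-- The embedding into `W` of the pushout `V ⊕_{ν,ω} U` determined by injections `δ : V → W` and
`ε : U → W`; it is `upArrow δ ε` followed by the inclusion of `δ(V) + ε(U)`. -/
def kerCorrLift : (kerCorr δ ε hδ hε).po →ₗ[ZMod p] W :=
  (LinearMap.ker (δ.coprod ε)).liftQ (δ.coprod ε) le_rfl

theorem kerCorrLift_injective : Function.Injective (kerCorrLift hδ hε) :=
  LinearMap.ker_eq_bot.1 (Submodule.ker_liftQ_eq_bot _ _ _ le_rfl)

theorem kerCorrLift_comp_mkQ :
    kerCorrLift hδ hε ∘ₗ (kerCorr δ ε hδ hε).carrier.mkQ = δ.coprod ε :=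
  Submodule.liftQ_mkQ _ _ _

theorem kerCorrLift_comp_inl : kerCorrLift hδ hε ∘ₗ (kerCorr δ ε hδ hε).inl = δ := by
  rw [Corr.inl, ← LinearMap.comp_assoc, kerCorrLift_comp_mkQ, LinearMap.coprod_inl]

theorem kerCorrLift_comp_inr : kerCorrLift hδ hε ∘ₗ (kerCorr δ ε hδ hε).inr = ε := by
  rw [Corr.inr, ← LinearMap.comp_assoc, kerCorrLift_comp_mkQ, LinearMap.coprod_inr]

end KerCorr

namespace VIPresheaf

theorem map_eq_self (F : VIPresheaf p) {V : FDVec p} {f : V →ₗ[ZMod p] V}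
    (hf : Function.Injective f) (h : f = LinearMap.id) (x : F.obj V) : F.map f hf x = x := by
  subst h
  exact F.map_id V hf x

theorem map_map_of_comp_eq (F : VIPresheaf p) {V W X : FDVec p} {f : V →ₗ[ZMod p] W}
    {g : W →ₗ[ZMod p] X} {h : V →ₗ[ZMod p] X} (hf : Function.Injective f)
    (hg : Function.Injective g) (hh : Function.Injective h) (comp_eq : g ∘ₗ f = h) (x : F.obj X) :
    F.map f hf (F.map g hg x) = F.map h hh x := by
  subst comp_eq
  exact (F.map_comp f hf g hg hh x).symm

/-- The objects of the category of elements of `F`: pairs `(V, x)` with `x ∈ F(V)`. -/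
structure Elements (F : VIPresheaf p) : Type 1 where
  space : FDVec p
  val : F.obj space

variable {F : VIPresheaf p}

/-- The morphisms `(V, x) ⟶ (W, y)` of the category of elements of `F`: injective linear maps
`f : V → W` with `f^* y = x`. -/
@[ext]
structure Elements.Hom (X Y : F.Elements) where
  toLinearMap : X.space →ₗ[ZMod p] Y.space
  injective : Function.Injective toLinearMap
  map_val : F.map toLinearMap injective Y.val = X.val

instance : Category F.Elements where
  Hom := Elements.Hom
  id X := ⟨LinearMap.id, Function.injective_id, F.map_id _ _ _⟩
  comp f g := ⟨g.toLinearMap ∘ₗ f.toLinearMap, g.injective.comp f.injective, by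
    rw [F.map_comp _ f.injective _ g.injective, g.map_val, f.map_val]⟩

end VIPresheaf

namespace CentralFib

open VIPresheaf

variable {F : VIPresheaf p} {X Y Z : F.Elements}

section Legs

variable (s : CentralFib F X.space X.val Y.space)

/-- The pair `(V ⊕_{ν,ω} W, b)` formed by an element `b` of `σ_{(V,x)}F(W)`. -/
def pt : F.Elements := ⟨s.1.po, s.2.1⟩

/-- The injection `ι_V` as a morphism `(V, x) ⟶ (V ⊕_{ν,ω} W, b)`. -/
def inl : X ⟶ s.pt := ⟨s.1.inl, s.1.inl_injective, s.2.2⟩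

variable {s}

/-- The injection `ι_W` as a morphism `(W, w) ⟶ (V ⊕_{ν,ω} W, b)`, for `b` lying over `w`. -/
def inr (hs : centralMap F X.space X.val Y.space s = Y.val) : Y ⟶ s.pt :=
  ⟨s.1.inr, s.1.inr_injective, hs⟩

end Legs

/-- The element of `σ_{(V,x)}F(W)` cut out by a cospan `(V, x) ⟶ (Z, z) ⟵ (W, w)`: the restriction
of `z` to the sum of the images of `V` and `W` in `Z`. -/
def ofCospan (f : X ⟶ Z) (g : Y ⟶ Z) : CentralFib F X.space X.val Y.space :=
  ⟨kerCorr f.toLinearMap g.toLinearMap f.injective g.injective,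
    F.map (kerCorrLift f.injective g.injective) (kerCorrLift_injective _ _) Z.val,
    (F.map_map_of_comp_eq _ _ f.injective (kerCorrLift_comp_inl _ _) Z.val).trans f.map_val⟩

theorem centralMap_ofCospan (f : X ⟶ Z) (g : Y ⟶ Z) :
    centralMap F X.space X.val Y.space (ofCospan f g) = Y.val :=
  (F.map_map_of_comp_eq _ _ g.injective (kerCorrLift_comp_inr _ _) Z.val).trans g.map_val

theorem exists_ofCospan_hom (f : X ⟶ Z) (g : Y ⟶ Z) :
    ∃ h : (ofCospan f g).pt ⟶ Z,
      (ofCospan f g).inl ≫ h = f ∧ inr (centralMap_ofCospan f g) ≫ h = g :=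
  ⟨⟨kerCorrLift f.injective g.injective, kerCorrLift_injective _ _, rfl⟩,
    Elements.Hom.ext (kerCorrLift_comp_inl f.injective g.injective),
    Elements.Hom.ext (kerCorrLift_comp_inr f.injective g.injective)⟩

variable {s s' : CentralFib F X.space X.val Y.space}
  {hs : centralMap F X.space X.val Y.space s = Y.val}
  {hs' : centralMap F X.space X.val Y.space s' = Y.val}

theorem hom_ext {f g : s.pt ⟶ Z} (hl : s.inl ≫ f = s.inl ≫ g) (hr : inr hs ≫ f = inr hs ≫ g) :
    f = g :=
  Elements.Hom.ext (Corr.hom_ext (congrArg Elements.Hom.toLinearMap hl)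
    (congrArg Elements.Hom.toLinearMap hr))

theorem eq_of_hom (f : s.pt ⟶ s'.pt) (hl : s.inl ≫ f = s'.inl) (hr : inr hs ≫ f = inr hs') :
    s = s' := by
  obtain ⟨c, b, hb⟩ := s
  obtain ⟨c', b', hb'⟩ := s'
  have comp_inl : f.toLinearMap ∘ₗ c.inl = c'.inl := congrArg Elements.Hom.toLinearMap hl
  have comp_inr : f.toLinearMap ∘ₗ c.inr = c'.inr := congrArg Elements.Hom.toLinearMap hr
  obtain rfl : c = c' := Corr.eq_of_injective f.injective comp_inl comp_inr
  have hid : f.toLinearMap = LinearMap.id := Corr.hom_ext comp_inl comp_inr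
  obtain rfl : b = b' := f.map_val.symm.trans (F.map_eq_self f.injective hid b')
  rfl

theorem nonempty_isColimit_of_unique
    (unique : ∀ t, centralMap F X.space X.val Y.space t = Y.val → t = s) :
    Nonempty (IsColimit (BinaryCofan.mk s.inl (inr hs))) := by
  have exists_desc {Z : F.Elements} (f : X ⟶ Z) (g : Y ⟶ Z) :
      ∃ h : s.pt ⟶ Z, s.inl ≫ h = f ∧ inr hs ≫ h = g := by
    obtain rfl := unique (ofCospan f g) (centralMap_ofCospan f g)
    exact exists_ofCospan_hom f g
  choose desc inl_desc inr_desc using @exists_desc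
  exact ⟨BinaryCofan.IsColimit.mk _ desc inl_desc inr_desc fun f g m hl hr =>
    hom_ext (hl.trans (inl_desc f g).symm) (hr.trans (inr_desc f g).symm)⟩

theorem eq_ofCospan_coprod [HasBinaryCoproduct X Y]
    (hs : centralMap F X.space X.val Y.space s = Y.val) :
    s = ofCospan (coprod.inl : X ⟶ X ⨿ Y) coprod.inr := by
  obtain ⟨h, inl_h, inr_h⟩ := exists_ofCospan_hom (coprod.inl : X ⟶ X ⨿ Y) coprod.inr
  symm
  refine eq_of_hom (hs := centralMap_ofCospan _ _) (hs' := hs)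
    (h ≫ coprod.desc s.inl (inr hs)) ?_ ?_
  · rw [reassoc_of% inl_h, coprod.inl_desc]
  · rw [reassoc_of% inr_h, coprod.inr_desc]

end CentralFib

namespace VIPresheaf

variable {F : VIPresheaf p}

theorem IsCentral.nonempty_isColimit {X Y : F.Elements} (hX : F.IsCentral X.space X.val)
    {s : CentralFib F X.space X.val Y.space}
    (hs : centralMap F X.space X.val Y.space s = Y.val) :
    Nonempty (IsColimit (BinaryCofan.mk s.inl (CentralFib.inr hs))) :=
  CentralFib.nonempty_isColimit_of_unique fun _ ht => (hX Y.space).injective (ht.trans hs.symm)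

theorem isCentral_iff_hasBinaryCoproduct {X : F.Elements} :
    F.IsCentral X.space X.val ↔ ∀ Y : F.Elements, HasBinaryCoproduct X Y := by
  refine ⟨fun hX Y => ?_, fun hX W => (Function.bijective_iff_existsUnique _).2 fun w => ?_⟩
  · obtain ⟨s, hs⟩ := (hX Y.space).surjective Y.val
    obtain ⟨hcolim⟩ := hX.nonempty_isColimit hs
    exact HasColimit.mk ⟨_, hcolim⟩
  · have := hX ⟨W, w⟩
    exact ⟨_, CentralFib.centralMap_ofCospan (Y := ⟨W, w⟩) coprod.inl coprod.inr,
      fun _ => CentralFib.eq_ofCospan_coprod (Y := ⟨W, w⟩)⟩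

section Amalgam

variable {V T : FDVec p} {x : F.obj V} {y : F.obj T}

theorem IsCentral.existsUnique_amalgam (hx : F.IsCentral V x) (y : F.obj T) :
    ∃! s : Σ c : Corr p V T, F.obj c.po,
      F.map s.1.inl s.1.inl_injective s.2 = x ∧ F.map s.1.inr s.1.inr_injective s.2 = y := by
  obtain ⟨⟨c, z, hzx⟩, hzy, unique⟩ := (hx T).existsUnique y
  refine ⟨⟨c, z⟩, ⟨hzx, hzy⟩, fun s hs => ?_⟩
  exact congrArg (Sigma.map id fun _ => Subtype.val) (unique ⟨s.1, s.2, hs.1⟩ hs.2)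

theorem IsCentral.amalgam (hx : F.IsCentral V x) (hy : F.IsCentral T y) {c : Corr p V T}
    {z : F.obj c.po} (hzx : F.map c.inl c.inl_injective z = x)
    (hzy : F.map c.inr c.inr_injective z = y) : F.IsCentral c.po z := by
  let X : F.Elements := ⟨V, x⟩
  let Y : F.Elements := ⟨T, y⟩
  let s : CentralFib F X.space X.val Y.space := ⟨c, z, hzx⟩
  obtain ⟨hcolim⟩ := IsCentral.nonempty_isColimit (Y := Y) (s := s) hx hzy
  have hX : ∀ Z, HasBinaryCoproduct X Z := isCentral_iff_hasBinaryCoproduct.1 hx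
  have hY : ∀ Z, HasBinaryCoproduct Y Z := isCentral_iff_hasBinaryCoproduct.1 hy
  exact isCentral_iff_hasBinaryCoproduct (X := s.pt).2 fun Z =>
    hasBinaryCoproduct_of_isColimit_binaryCofan hcolim

end Amalgam

end VIPresheaf

end Coproducts

/-- **Statement 10.** If `(V,x)` and `(T,y)` are central elements of `F`, then there exist a
unique class `[M,ν,τ] ∈ 𝐁(V,T)` and a unique `z ∈ F(V ⊕_{ν,τ} T)` with `ι_V^* z = x`
and `ι_T^* z = y`; moreover the pair `(V ⊕_{ν,τ} T, z)` is central for `F`. -/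
theorem statement_10 {p : ℕ} [Fact p.Prime] (F : VIPresheaf p) (V T : FDVec p)
    (x : F.obj V) (y : F.obj T) (hx : F.IsCentral V x) (hy : F.IsCentral T y) :
    (∃! s : Σ c : Corr p V T, F.obj c.po,
        F.map s.1.inl s.1.inl_injective s.2 = x ∧
        F.map s.1.inr s.1.inr_injective s.2 = y) ∧
    (∀ s : Σ c : Corr p V T, F.obj c.po,
        (F.map s.1.inl s.1.inl_injective s.2 = x ∧
         F.map s.1.inr s.1.inr_injective s.2 = y) →
        F.IsCentral s.1.po s.2) :=
  ⟨hx.existsUnique_amalgam y, fun _ hs => hx.amalgam hy hs.1 hs.2⟩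

end Paper
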